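/- Let (X, 𝒜, μ) be a measure space with μ σ-finite, let α ∈ (1,∞), and let ρ : X → [0,∞) be measurable with ∫ ρ dμ = 1 and ∫ ρ^α dμ < ∞. Then ∫ ρ^α dμ = sup over all countable measurable partitions (A_i)_{i∈ℕ} of X into sets of finite measure of Σ_i ω(A_i)^α / μ(A_i)^{α−1}, where ω(A_i) = ∫_{A_i} ρ dμ and summands with μ(A_i) = 0 are taken to be 0. Consequently, the Rényi entropy R_α := (1/(α−1)) log ∫ ρ^α dμ equals (1/(α−1)) · sup over such partitions of log Σ_i ω(A_i)^α / μ(A_i)^{α−1}. -/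

import Mathlib

open MeasureTheory

lemma renyi_aux_jensen {X : Type*} [MeasurableSpace X] (μ : Measure X) {α : ℝ}
    (hα : 1 < α) (ρ : X → ℝ) (hρ_nonneg : ∀ x, 0 ≤ ρ x)
    (hi : Integrable ρ μ) (hiα : Integrable (fun x => ρ x ^ α) μ)
    (A : Set X) (hA : μ A < ⊤) :
    (∫ x in A, ρ x ∂μ) ^ α / ((μ A).toReal) ^ (α - 1) ≤ ∫ x in A, ρ x ^ α ∂μ := by
  by_cases h0 : μ A = 0
  · rw [setIntegral_measure_zero _ h0, setIntegral_measure_zero _ h0,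
      Real.zero_rpow (by linarith)]
    simp
  have hm : 0 < (μ A).toReal := ENNReal.toReal_pos h0 hA.ne
  have hJ := (convexOn_rpow hα.le).map_set_average_le
    (Real.continuous_rpow_const (by linarith)).continuousOn isClosed_Ici h0 hA.ne
    (Filter.Eventually.of_forall fun x => hρ_nonneg x) hi.integrableOn hiα.integrableOn
  rw [setAverage_eq, setAverage_eq, smul_eq_mul, smul_eq_mul, Measure.real] at hJ
  have hw : 0 ≤ ∫ x in A, ρ x ∂μ := integral_nonneg hρ_nonneg
  rw [Real.mul_rpow (by positivity) hw, Real.inv_rpow hm.le] at hJ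
  have e : (μ A).toReal ^ α = (μ A).toReal ^ (α - 1) * (μ A).toReal := by
    rw [Real.rpow_sub_one hm.ne']; field_simp
  rw [e] at hJ
  have hp : 0 < (μ A).toReal ^ (α - 1) := Real.rpow_pos_of_pos hm _
  rw [div_le_iff₀ hp]
  have := mul_le_mul_of_nonneg_left hJ (mul_pos hp hm).le
  have e2 : (μ A).toReal ^ (α - 1) * (μ A).toReal * (((μ A).toReal)⁻¹ * ∫ x in A, ρ x ^ α ∂μ)
    = (∫ x in A, ρ x ^ α ∂μ) * (μ A).toReal ^ (α - 1) := by field_simp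
  have e3 : (μ A).toReal ^ (α - 1) * (μ A).toReal *
    (((μ A).toReal ^ (α - 1) * (μ A).toReal)⁻¹ * (∫ x in A, ρ x ∂μ) ^ α)
    = (∫ x in A, ρ x ∂μ) ^ α := by field_simp
  linarith

lemma renyi_aux_lower {X : Type*} [MeasurableSpace X] (μ : Measure X) {α : ℝ}
    (hα : 1 < α) (ρ : X → ℝ) (hρ_nonneg : ∀ x, 0 ≤ ρ x)
    (hi : Integrable ρ μ) (hiα : Integrable (fun x => ρ x ^ α) μ)
    (A : Set X) (hAm : MeasurableSet A) (hA : μ A < ⊤) (δ c : ℝ) (hc : 0 ≤ c)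
    (h1 : ∀ x ∈ A, c ≤ ρ x) (h2 : ∀ x ∈ A, ρ x ≤ Real.exp δ * c) :
    Real.exp (-(δ * α)) * ∫ x in A, ρ x ^ α ∂μ ≤
      (∫ x in A, ρ x ∂μ) ^ α / ((μ A).toReal) ^ (α - 1) := by
  by_cases h0 : μ A = 0
  · rw [setIntegral_measure_zero _ h0, setIntegral_measure_zero _ h0,
      Real.zero_rpow (by linarith)]
    simp
  have hm : 0 < (μ A).toReal := ENNReal.toReal_pos h0 hA.ne
  have hw : c * (μ A).toReal ≤ ∫ x in A, ρ x ∂μ := by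
    have := setIntegral_mono_on (f := fun _ => c) (integrableOn_const hA.ne) hi.integrableOn hAm h1
    simpa [Measure.real, mul_comm] using this
  have hu : ∫ x in A, ρ x ^ α ∂μ ≤ (Real.exp δ * c) ^ α * (μ A).toReal := by
    have := setIntegral_mono_on (g := fun _ => (Real.exp δ * c) ^ α) hiα.integrableOn
      (integrableOn_const hA.ne) hAm
      (fun x hx => Real.rpow_le_rpow (hρ_nonneg x) (h2 x hx) (by linarith))
    simpa [Measure.real, mul_comm] using this
  have hp : 0 < (μ A).toReal ^ (α - 1) := Real.rpow_pos_of_pos hm _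
  have e : (μ A).toReal ^ α = (μ A).toReal ^ (α - 1) * (μ A).toReal := by
    rw [Real.rpow_sub_one hm.ne']; field_simp
  rw [Real.mul_rpow (Real.exp_pos _).le hc, ← Real.exp_mul] at hu
  rw [le_div_iff₀ hp]
  calc _ ≤ Real.exp (-(δ * α)) * (Real.exp (δ * α) * c ^ α * (μ A).toReal)
        * (μ A).toReal ^ (α - 1) := by gcongr
    _ = (c * (μ A).toReal) ^ α := by
        rw [Real.mul_rpow hc hm.le, e, Real.exp_neg]
        field_simp
    _ ≤ _ := Real.rpow_le_rpow (by positivity) hw (by linarith)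

lemma renyi_aux_partition {X : Type*} [MeasurableSpace X] (μ : Measure X) [SigmaFinite μ]
    (ρ : X → ℝ) (hρ_meas : Measurable ρ) (hρ_nonneg : ∀ x, 0 ≤ ρ x) (δ : ℝ) (hδ : 0 < δ) :
    ∃ A : ℕ → Set X, (∀ i, MeasurableSet (A i)) ∧ Pairwise (Function.onFun Disjoint A) ∧
        (⋃ i, A i) = Set.univ ∧ (∀ i, μ (A i) < ⊤) ∧
        ∀ i, ∃ c : ℝ, 0 ≤ c ∧ (∀ x ∈ A i, c ≤ ρ x) ∧ (∀ x ∈ A i, ρ x ≤ Real.exp δ * c) := by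
  classical
  let k : X → ℤ := fun x => ⌊Real.log (ρ x) / δ⌋
  have hk : Measurable k := ((Real.measurable_log.comp hρ_meas).div_const δ).floor
  let b : X → Bool := fun x => decide (ρ x = 0)
  have hb : Measurable b := by
    refine measurable_to_bool ?_
    have : b ⁻¹' {true} = ρ ⁻¹' {0} := by ext x; simp [b]
    rw [this]; exact hρ_meas (measurableSet_singleton 0)
  let g : X → ℕ × (ℤ × Bool) := fun x => (spanningSetsIndex μ x, (k x, b x))
  have hg : Measurable g := (measurableSet_spanningSetsIndex μ).prodMk (hk.prodMk hb)
  have hf : Measurable (fun x => Encodable.encode (g x)) := (measurable_of_countable _).comp hg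
  refine ⟨fun i => (fun x => Encodable.encode (g x)) ⁻¹' {i},
    fun i => hf (measurableSet_singleton i), ?_, ?_, ?_, ?_⟩
  · intro i j hij
    refine Set.disjoint_left.2 fun x hx hy => hij ?_
    simp only [Set.mem_preimage, Set.mem_singleton_iff] at hx hy
    rw [← hx, ← hy]
  · ext x; simp
  · intro i
    rcases Set.eq_empty_or_nonempty ((fun x => Encodable.encode (g x)) ⁻¹' {i}) with h | ⟨y, hy⟩
    · simp [h]
    refine (measure_mono ?_).trans_lt (measure_spanningSets_lt_top μ (spanningSetsIndex μ y))
    intro x hx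
    have : g x = g y := Encodable.encode_injective (hx.trans hy.symm)
    have h3 : spanningSetsIndex μ x = spanningSetsIndex μ y := congrArg Prod.fst this
    rw [← h3]
    exact mem_spanningSetsIndex μ x
  · intro i
    rcases Set.eq_empty_or_nonempty ((fun x => Encodable.encode (g x)) ⁻¹' {i}) with h | ⟨y, hy⟩
    · exact ⟨0, le_rfl, by simp [h], by simp [h]⟩
    have key : ∀ x ∈ (fun x => Encodable.encode (g x)) ⁻¹' {i}, k x = k y ∧ b x = b y := by
      intro x hx
      have : g x = g y := Encodable.encode_injective (hx.trans hy.symm)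
      exact ⟨congrArg (fun p => p.2.1) this, congrArg (fun p => p.2.2) this⟩
    by_cases h0 : ρ y = 0
    · have hz : ∀ x ∈ (fun x => Encodable.encode (g x)) ⁻¹' {i}, ρ x = 0 := by
        intro x hx
        have := (key x hx).2
        simpa [b, h0] using this
      exact ⟨0, le_rfl, fun x hx => (hz x hx).ge, fun x hx => by simp [hz x hx]⟩
    · have hz : ∀ x ∈ (fun x => Encodable.encode (g x)) ⁻¹' {i}, 0 < ρ x := by
        intro x hx
        have := (key x hx).2
        have : ρ x ≠ 0 := by simpa [b, h0] using this
        exact lt_of_le_of_ne (hρ_nonneg x) this.symm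
      refine ⟨Real.exp (δ * k y), (Real.exp_pos _).le, fun x hx => ?_, fun x hx => ?_⟩
      · rw [← Real.le_log_iff_exp_le (hz x hx), ← (key x hx).1]
        have := Int.floor_le (Real.log (ρ x) / δ)
        rw [le_div_iff₀ hδ] at this
        simp only [k]; linarith
      · rw [← Real.exp_add, ← Real.log_le_iff_le_exp (hz x hx), ← (key x hx).1]
        have := (Int.lt_floor_add_one (Real.log (ρ x) / δ)).le
        rw [div_le_iff₀ hδ] at this
        simp only [k]; linarith

/-- Variational formula for `∫ ρ^α dμ`, `α ∈ (1,∞)` (commutative Rényi entropy): for σ-finite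
`μ` and a density `ρ ≥ 0` with `∫ ρ dμ = 1` and `ρ^α ∈ L¹(μ)`, `∫ ρ^α dμ` is the supremum,
over countable measurable partitions `(A_i)` of `X` into sets of finite measure, of
`Σ_i ω(A_i)^α / μ(A_i)^{α−1}` with `ω(A_i) = ∫_{A_i} ρ dμ` (summands with `μ(A_i) = 0` vanish
automatically, since then `ω(A_i) = 0` and `0 ^ α / 0 ^ (α−1) = 0`); consequently the Rényi
entropy `R_α = (1/(α−1)) log ∫ ρ^α dμ` equals `(1/(α−1))` times the supremum of the logs of
these sums. -/
theorem renyi_gt_one_partition_variational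
    {X : Type*} [MeasurableSpace X] (μ : Measure X) [SigmaFinite μ] {α : ℝ}
    (hα : α ∈ Set.Ioi (1 : ℝ))
    (ρ : X → ℝ) (hρ_meas : Measurable ρ) (hρ_nonneg : ∀ x, 0 ≤ ρ x)
    (hρ_int : ∫ x, ρ x ∂μ = 1)
    (hρα_int : Integrable (fun x => ρ x ^ α) μ) :
    IsLUB
      {r : ℝ | ∃ A : ℕ → Set X,
        (∀ i, MeasurableSet (A i)) ∧ Pairwise (Function.onFun Disjoint A) ∧
        (⋃ i, A i) = Set.univ ∧ (∀ i, μ (A i) < ⊤) ∧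
        Summable (fun i => (∫ x in A i, ρ x ∂μ) ^ α / ((μ (A i)).toReal) ^ (α - 1)) ∧
        r = ∑' i, (∫ x in A i, ρ x ∂μ) ^ α / ((μ (A i)).toReal) ^ (α - 1)}
      (∫ x, ρ x ^ α ∂μ) ∧
    (1 / (α - 1)) * Real.log (∫ x, ρ x ^ α ∂μ) =
      (1 / (α - 1)) * sSup (Real.log ''
        {r : ℝ | ∃ A : ℕ → Set X,
          (∀ i, MeasurableSet (A i)) ∧ Pairwise (Function.onFun Disjoint A) ∧
          (⋃ i, A i) = Set.univ ∧ (∀ i, μ (A i) < ⊤) ∧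
          Summable (fun i => (∫ x in A i, ρ x ∂μ) ^ α / ((μ (A i)).toReal) ^ (α - 1)) ∧
          r = ∑' i, (∫ x in A i, ρ x ∂μ) ^ α / ((μ (A i)).toReal) ^ (α - 1)}) := by
  have hα1 : 1 < α := hα
  have hi : Integrable ρ μ := by
    by_contra h
    rw [integral_undef h] at hρ_int
    exact zero_ne_one hρ_int
  have hα_nonneg : ∀ x, 0 ≤ ρ x ^ α := fun x => Real.rpow_nonneg (hρ_nonneg x) _
  have hsumα : ∀ A : ℕ → Set X, (∀ i, MeasurableSet (A i)) →
      Pairwise (Function.onFun Disjoint A) → (⋃ i, A i) = Set.univ →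
      HasSum (fun i => ∫ x in A i, ρ x ^ α ∂μ) (∫ x, ρ x ^ α ∂μ) := by
    intro A h1 h2 h3
    have := hasSum_integral_iUnion h1 h2 (hρα_int.integrableOn (s := ⋃ i, A i))
    rwa [h3, setIntegral_univ] at this
  have hterm : ∀ A : Set X,
      0 ≤ (∫ x in A, ρ x ∂μ) ^ α / ((μ A).toReal) ^ (α - 1) := by
    intro A
    have : 0 ≤ ∫ x in A, ρ x ∂μ := integral_nonneg hρ_nonneg
    positivity
  have hlub : IsLUB
      {r : ℝ | ∃ A : ℕ → Set X,
        (∀ i, MeasurableSet (A i)) ∧ Pairwise (Function.onFun Disjoint A) ∧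
        (⋃ i, A i) = Set.univ ∧ (∀ i, μ (A i) < ⊤) ∧
        Summable (fun i => (∫ x in A i, ρ x ∂μ) ^ α / ((μ (A i)).toReal) ^ (α - 1)) ∧
        r = ∑' i, (∫ x in A i, ρ x ∂μ) ^ α / ((μ (A i)).toReal) ^ (α - 1)}
      (∫ x, ρ x ^ α ∂μ) := by
    constructor
    · rintro r ⟨A, h1, h2, h3, h4, h5, rfl⟩
      have hs := hsumα A h1 h2 h3
      rw [← hs.tsum_eq]
      exact h5.tsum_le_tsum (fun i => renyi_aux_jensen μ hα1 ρ hρ_nonneg hi hρα_int _ (h4 i))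
        hs.summable
    · intro B hB
      have hall : ∀ δ : ℝ, 0 < δ → Real.exp (-(δ * α)) * ∫ x, ρ x ^ α ∂μ ≤ B := by
        intro δ hδ
        obtain ⟨A, h1, h2, h3, h4, h5⟩ := renyi_aux_partition μ ρ hρ_meas hρ_nonneg δ hδ
        have hs := hsumα A h1 h2 h3
        have hS : Summable
            (fun i => (∫ x in A i, ρ x ∂μ) ^ α / ((μ (A i)).toReal) ^ (α - 1)) :=
          Summable.of_nonneg_of_le (fun i => hterm _)
            (fun i => renyi_aux_jensen μ hα1 ρ hρ_nonneg hi hρα_int _ (h4 i)) hs.summable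
        refine le_trans ?_ (hB ⟨A, h1, h2, h3, h4, hS, rfl⟩)
        have hs2 := hs.mul_left (Real.exp (-(δ * α)))
        rw [← hs2.tsum_eq]
        refine hs2.summable.tsum_le_tsum (fun i => ?_) hS
        obtain ⟨c, hc, hc1, hc2⟩ := h5 i
        exact renyi_aux_lower μ hα1 ρ hρ_nonneg hi hρα_int _ (h1 i) (h4 i) δ c hc hc1 hc2
      have hcont : Continuous (fun δ : ℝ => Real.exp (-(δ * α)) * ∫ x, ρ x ^ α ∂μ) := by
        fun_prop
      have ht := (hcont.tendsto 0).mono_left (nhdsWithin_le_nhds (s := Set.Ioi 0))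
      have := le_of_tendsto ht (Filter.eventually_of_mem self_mem_nhdsWithin hall)
      simpa using this
  refine ⟨hlub, ?_⟩
  congr 1
  have hpos : ∀ r ∈ {r : ℝ | ∃ A : ℕ → Set X,
        (∀ i, MeasurableSet (A i)) ∧ Pairwise (Function.onFun Disjoint A) ∧
        (⋃ i, A i) = Set.univ ∧ (∀ i, μ (A i) < ⊤) ∧
        Summable (fun i => (∫ x in A i, ρ x ∂μ) ^ α / ((μ (A i)).toReal) ^ (α - 1)) ∧
        r = ∑' i, (∫ x in A i, ρ x ∂μ) ^ α / ((μ (A i)).toReal) ^ (α - 1)}, 0 < r := by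
    rintro r ⟨A, h1, h2, h3, h4, h5, rfl⟩
    have hs := hasSum_integral_iUnion h1 h2 (hi.integrableOn (s := ⋃ i, A i))
    rw [h3, setIntegral_univ, hρ_int] at hs
    have hex : ∃ i, (∫ x in A i, ρ x ∂μ) ≠ 0 := by
      by_contra! h
      simp only [h] at hs
      exact zero_ne_one (hasSum_zero.unique hs)
    obtain ⟨i, hne⟩ := hex
    refine h5.tsum_pos (fun i => hterm _) i ?_
    have hw : 0 < ∫ x in A i, ρ x ∂μ :=
      lt_of_le_of_ne (integral_nonneg hρ_nonneg) hne.symm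
    have h0 : μ (A i) ≠ 0 := fun h => hne (setIntegral_measure_zero _ h)
    have hm : 0 < (μ (A i)).toReal := ENNReal.toReal_pos h0 (h4 i).ne
    positivity
  have hne := hlub.nonempty
  obtain ⟨r0, hr0⟩ := id hne
  have hI : 0 < ∫ x, ρ x ^ α ∂μ := (hpos r0 hr0).trans_le (hlub.1 hr0)
  symm
  refine IsLUB.csSup_eq ⟨?_, ?_⟩ (hne.image _)
  · rintro _ ⟨r, hr, rfl⟩
    exact Real.log_le_log (hpos r hr) (hlub.1 hr)
  · intro y hy
    rw [Real.log_le_iff_le_exp hI]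
    refine hlub.2 fun r hr => ?_
    rw [← Real.log_le_iff_le_exp (hpos r hr)]
    exact hy ⟨r, hr, rfl⟩
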